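/- If χ(F) ≤ k, then any n-vertex F-free graph contains o(n^k) copies of K_k; in fact ex(n, K_k, F) = o(n^k). -/

import Mathlib

open SimpleGraph Filter Asymptotics Finset

/-- The set of copies of `H` in `G`: subgraphs of `G` isomorphic to `H`. -/
def SimpleGraph.copySet {α V : Type*} (H : SimpleGraph α) (G : SimpleGraph V) :
    Set G.Subgraph := {C | Nonempty (H ≃g C.coe)}

/-- The number of (unlabeled) copies of `H` in `G`, i.e. `N(H,G)`. -/
noncomputable def copyCount {α V : Type*} (H : SimpleGraph α) (G : SimpleGraph V) : ℕ :=
  (H.copySet G).ncard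

/-- `G` is `F`-free: it contains no subgraph isomorphic to `F`. -/
def FFree {β V : Type*} (F : SimpleGraph β) (G : SimpleGraph V) : Prop := F.copySet G = ∅

/-- The generalized Turán number `ex(n, H, F)`. -/
noncomputable def exGen {α β : Type*} (n : ℕ) (H : SimpleGraph α) (F : SimpleGraph β) : ℕ :=
  sSup {m | ∃ G : SimpleGraph (Fin n), FFree F G ∧ copyCount H G = m}

/-- The complete multipartite graph with part sizes `a 0, …, a (k-1)`. -/
def CMP (k : ℕ) (a : Fin k → ℕ) : SimpleGraph (Σ i : Fin k, Fin (a i)) :=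
  SimpleGraph.comap Sigma.fst ⊤


open scoped BigOperators

/-- Jensen's inequality for powers of averages. -/
lemma jensen_expect {ι : Type*} [Fintype ι] [Nonempty ι] (f : ι → ℝ) (hf : ∀ i, 0 ≤ f i) (m : ℕ) :
    (𝔼 i, f i) ^ m ≤ 𝔼 i, f i ^ m := by
  have h := Real.pow_arith_mean_le_arith_mean_pow (Finset.univ : Finset ι)
    (fun _ => (Fintype.card ι : ℝ)⁻¹) f (fun _ _ => by positivity)
    (by simp) (fun i _ => hf i) m
  rw [Fintype.expect_eq_sum_div_card, Fintype.expect_eq_sum_div_card]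
  rw [← Finset.mul_sum, ← Finset.mul_sum] at h
  simpa [div_eq_inv_mul] using h

lemma expect_cons {V : Type*} [Fintype V] (k : ℕ) (g : (Fin (k + 1) → V) → ℝ) :
    𝔼 x, g x = 𝔼 a : V, 𝔼 y : Fin k → V, g (Fin.cons a y) := by
  rw [← Finset.expect_product' Finset.univ Finset.univ (fun a y => g (Fin.cons a y))]
  symm
  exact Fintype.expect_equiv (Fin.consEquiv (fun _ => V)) _ _ (fun p => rfl)

/-- The density of blow-ups is at least a power of the density. -/
lemma blowup_density {V : Type*} [Fintype V] [Nonempty V] (t : ℕ) :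
    ∀ (k : ℕ) (g : (Fin k → V) → ℝ), (∀ x, 0 ≤ g x) →
      (𝔼 x, g x) ^ (t ^ k) ≤
        𝔼 f : Fin k → Fin t → V, ∏ c : Fin k → Fin t, g (fun i => f i (c i)) := by
  intro k
  induction k with
  | zero =>
    intro g hg
    have : ∀ x : Fin 0 → V, g x = g default := fun x => by rw [Subsingleton.elim x default]
    simp [this]
  | succ k ih =>
    intro g hg
    have h1 : 𝔼 x, g x = 𝔼 y : Fin k → V, 𝔼 a : V, g (Fin.cons a y) := by
      rw [expect_cons]
      exact Finset.expect_comm (Finset.univ : Finset V)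
        (Finset.univ : Finset (Fin k → V)) (fun a y => g (Fin.cons a y))
    have h2 : (𝔼 x, g x) ^ t ≤ 𝔼 X : Fin t → V, 𝔼 y : Fin k → V, ∏ j, g (Fin.cons (X j) y) := by
      have hc := Finset.expect_comm (Finset.univ : Finset (Fin t → V))
        (Finset.univ : Finset (Fin k → V)) (fun X y => ∏ j, g (Fin.cons (X j) y))
      rw [h1]
      refine le_trans ?_ hc.symm.le
      refine (jensen_expect _ (fun y => Finset.expect_nonneg fun _ _ => hg _) t).trans_eq ?_
      refine Finset.expect_congr rfl fun y _ => ?_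
      rw [Finset.expect_pow]
      simp
    have h0 : 0 ≤ 𝔼 x, g x := Finset.expect_nonneg fun _ _ => hg _
    have hG : ∀ (X : Fin t → V) (y : Fin k → V), 0 ≤ ∏ j, g (Fin.cons (X j) y) :=
      fun X y => Finset.prod_nonneg fun _ _ => hg _
    calc (𝔼 x, g x) ^ (t ^ (k + 1)) = ((𝔼 x, g x) ^ t) ^ (t ^ k) := by
          rw [← pow_mul, pow_succ, mul_comm]
      _ ≤ (𝔼 X : Fin t → V, 𝔼 y : Fin k → V, ∏ j, g (Fin.cons (X j) y)) ^ (t ^ k) :=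
          pow_le_pow_left₀ (pow_nonneg h0 _) h2 _
      _ ≤ 𝔼 X : Fin t → V, (𝔼 y : Fin k → V, ∏ j, g (Fin.cons (X j) y)) ^ (t ^ k) :=
          jensen_expect _ (fun X => Finset.expect_nonneg fun _ _ => hG _ _) _
      _ ≤ 𝔼 X : Fin t → V, 𝔼 f : Fin k → Fin t → V, ∏ c : Fin k → Fin t,
            ∏ j, g (Fin.cons (X j) (fun i => f i (c i))) :=
          Finset.expect_le_expect fun X _ => ih _ (hG X)
      _ = _ := by
          rw [expect_cons]
          refine Finset.expect_congr rfl fun X _ => Finset.expect_congr rfl fun f _ => ?_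
          rw [Finset.prod_comm,
            ← Finset.prod_product' Finset.univ Finset.univ
              (fun j (c : Fin k → Fin t) => g (Fin.cons (X j) (fun i => f i (c i))))]
          refine Fintype.prod_equiv (Fin.consEquiv (fun _ => Fin t)) _ _ (fun p => ?_)
          congr 1
          funext i
          refine Fin.cases ?_ (fun i => ?_) i <;> simp [Fin.consEquiv]

/-- Few maps have a collision at a given pair. -/
lemma collision_card {V : Type*} [Fintype V] [DecidableEq V] (k t : ℕ) (i : Fin k) (a b : Fin t)
    (hab : a ≠ b) :
    #{f : Fin k → Fin t → V | f i a = f i b} * Fintype.card V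
      ≤ Fintype.card (Fin k → Fin t → V) := by
  rw [← Finset.card_univ (α := V), ← Finset.card_product, ← Finset.card_univ]
  refine Finset.card_le_card_of_injOn
    (fun p => Function.update p.1 i (Function.update (p.1 i) a p.2)) (fun _ _ => by simp) ?_
  rintro ⟨f, v⟩ hf ⟨f', v'⟩ hf' h
  simp only [Finset.coe_product, Set.mem_prod, Finset.coe_filter, Finset.mem_univ, true_and,
    Set.mem_ofPred_eq, Finset.coe_univ, Set.mem_univ, and_true] at hf hf'
  have key : ∀ j c, Function.update f i (Function.update (f i) a v) j c
      = Function.update f' i (Function.update (f' i) a v') j c := fun j c => by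
    have := congrFun (congrFun h j) c
    exact this
  have hv : v = v' := by simpa using key i a
  have hne : ∀ c, c ≠ a → f i c = f' i c := fun c hc => by simpa [hc] using key i c
  have hff : f = f' := by
    funext j c
    by_cases hj : j = i
    · subst hj
      by_cases hc : c = a
      · subst hc
        rw [hf, hf', hne b hab.symm]
      · exact hne c hc
    · simpa [hj] using key j c
  rw [hv, hff]

/-- A dense set of tuples contains a nondegenerate blow-up. -/
lemma exists_blowup {V : Type*} [Fintype V] [Nonempty V] (k t : ℕ) (S : Finset (Fin k → V)) (ε : ℝ)
    (hε : 0 < ε) (hS : ε * (Fintype.card V : ℝ) ^ k ≤ #S)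
    (hV : (k * t * t : ℝ) < ε ^ (t ^ k) * Fintype.card V) :
    ∃ f : Fin k → Fin t → V, (∀ i, Function.Injective (f i)) ∧
      ∀ c : Fin k → Fin t, (fun i => f i (c i)) ∈ S := by
  classical
  by_contra hcon
  push Not at hcon
  set n : ℝ := (Fintype.card V : ℝ) with hn
  have hnpos : 0 < n := by simp only [hn]; exact_mod_cast Fintype.card_pos
  let g : (Fin k → V) → ℝ := fun x => if x ∈ S then 1 else 0
  have hg : ∀ x, 0 ≤ g x := fun x => by simp only [g]; split_ifs <;> norm_num
  have hEg : ε ≤ 𝔼 x, g x := by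
    rw [Fintype.expect_eq_sum_div_card, le_div_iff₀ (by exact_mod_cast Fintype.card_pos)]
    simpa [g] using hS
  have h1 := (pow_le_pow_left₀ hε.le hEg (t ^ k)).trans (blowup_density t k g hg)
  let B : Finset (Fin k → Fin t → V) :=
    (Finset.univ : Finset (Fin k × Fin t × Fin t)).biUnion fun p =>
      if p.2.1 = p.2.2 then ∅ else ({f : Fin k → Fin t → V | f p.1 p.2.1 = f p.1 p.2.2} : Finset _)
  set N : ℝ := (Fintype.card (Fin k → Fin t → V) : ℝ) with hN
  have hNpos : 0 < N := by simp only [hN]; exact_mod_cast Fintype.card_pos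
  have hB : (#B : ℝ) * n ≤ k * t * t * N := by
    have : #B * Fintype.card V ≤ k * t * t * Fintype.card (Fin k → Fin t → V) := by
      calc #B * Fintype.card V ≤ (∑ p : Fin k × Fin t × Fin t,
            #(if p.2.1 = p.2.2 then ∅ else
              ({f : Fin k → Fin t → V | f p.1 p.2.1 = f p.1 p.2.2} : Finset _))) *
              Fintype.card V := Nat.mul_le_mul_right _ Finset.card_biUnion_le
        _ ≤ ∑ p : Fin k × Fin t × Fin t, Fintype.card (Fin k → Fin t → V) := by
            rw [Finset.sum_mul]
            refine Finset.sum_le_sum fun p _ => ?_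
            split_ifs with h
            · simp
            · exact collision_card k t p.1 p.2.1 p.2.2 h
        _ = _ := by
            rw [Finset.sum_const, Finset.card_univ]
            simp [mul_assoc]
    simp only [hn, hN]
    exact_mod_cast this
  have h2 : ∑ f : Fin k → Fin t → V, ∏ c : Fin k → Fin t, g (fun i => f i (c i)) ≤ #B := by
    have hBs : (#B : ℝ) = ∑ f : Fin k → Fin t → V, if f ∈ B then (1 : ℝ) else 0 := by simp
    rw [hBs]
    refine Finset.sum_le_sum fun f _ => ?_
    split_ifs with hf
    · exact Finset.prod_le_one (fun _ _ => hg _)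
        fun c _ => by simp only [g]; split_ifs <;> norm_num
    · have hfi : ∀ i, Function.Injective (f i) := by
        intro i a b hab
        by_contra hne
        apply hf
        simp only [B, Finset.mem_biUnion, Finset.mem_univ, true_and]
        exact ⟨(i, a, b), by simp [hne, hab]⟩
      obtain ⟨c, hc⟩ := hcon f hfi
      exact (Finset.prod_eq_zero (Finset.mem_univ c) (by simp [g, hc])).le
  rw [Fintype.expect_eq_sum_div_card, le_div_iff₀ hNpos] at h1
  have h3 : ε ^ (t ^ k) * N * n ≤ k * t * t * N :=
    (mul_le_mul_of_nonneg_right (h1.trans h2) hnpos.le).trans hB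
  have h4 := mul_lt_mul_of_pos_right hV hNpos
  nlinarith

/-- The number of copies of the complete graph is at most the number of clique tuples. -/
lemma copyCount_le {V : Type*} [Fintype V] [DecidableEq V] (k : ℕ) (G : SimpleGraph V)
    [DecidableRel G.Adj] :
    _root_.copyCount (completeGraph (Fin k)) G ≤
      #{x : Fin k → V | ∀ i j, i ≠ j → G.Adj (x i) (x j)} := by
  classical
  have h1 : (completeGraph (Fin k)).copySet G
      = Set.range (Copy.toSubgraph (A := completeGraph (Fin k)) (B := G)) :=
    Copy.range_toSubgraph.symm
  unfold _root_.copyCount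
  rw [h1, ← Set.image_univ]
  have hinj : Function.Injective
      (fun f : Copy (completeGraph (Fin k)) G => (f : Fin k → V)) := DFunLike.coe_injective
  have : Finite (Copy (completeGraph (Fin k)) G) := Finite.of_injective _ hinj
  refine (Set.ncard_image_le Set.finite_univ).trans ?_
  rw [← Set.ncard_coe_finset]
  refine Set.ncard_le_ncard_of_injOn (fun f => (f : Fin k → V)) ?_ hinj.injOn (Set.toFinite _)
  intro f _
  simp only [Finset.coe_filter, Finset.mem_univ, true_and, Set.mem_ofPred_eq]
  intro i j hij
  exact f.toHom.map_adj (by simpa [completeGraph] using hij)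

theorem stmt7 {β : Type*} [Fintype β] (k : ℕ) (F : SimpleGraph β)
    (hF : F.chromaticNumber ≤ (k : ℕ∞)) :
    (fun n : ℕ => (exGen n (completeGraph (Fin k)) F : ℝ))
      =o[atTop] fun n : ℕ => (n : ℝ) ^ k := by
  classical
  obtain ⟨col⟩ := chromaticNumber_le_iff_colorable.mp hF
  rw [isLittleO_iff]
  intro ε hε
  set t := Fintype.card β with ht
  have hT : Tendsto (fun n : ℕ => ε ^ (t ^ k) * (n : ℝ)) atTop atTop :=
    tendsto_natCast_atTop_atTop.const_mul_atTop (by positivity)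
  filter_upwards [hT.eventually_gt_atTop (k * t * t : ℝ), eventually_gt_atTop 0] with n hn hn0
  rw [Real.norm_of_nonneg (by positivity), Real.norm_of_nonneg (by positivity)]
  refine le_trans ?_ (Nat.floor_le (by positivity : (0 : ℝ) ≤ ε * (n : ℝ) ^ k))
  rw [Nat.cast_le]
  refine csSup_le' ?_
  rintro m ⟨G, hG, rfl⟩
  refine Nat.le_floor ?_
  by_contra! hlt
  have : Nonempty (Fin n) := ⟨⟨0, hn0⟩⟩
  have hle := copyCount_le k G
  obtain ⟨f, hinj, hS⟩ := exists_blowup k t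
    ({x : Fin k → Fin n | ∀ i j, i ≠ j → G.Adj (x i) (x j)} : Finset _) ε hε
    (by
      rw [Fintype.card_fin]
      exact hlt.le.trans (by exact_mod_cast hle)) (by simpa using hn)
  let e := Fintype.equivFin β
  have hadj : ∀ v w, col v ≠ col w → G.Adj (f (col v) (e v)) (f (col w) (e w)) := by
    intro v w hvw
    have := hS (Function.update (fun _ => e v) (col w) (e w))
    simp only [Finset.mem_filter, Finset.mem_univ, true_and] at this
    simpa [hvw] using this _ _ hvw
  let φ : F →g G := ⟨fun v => f (col v) (e v), fun {v w} h => hadj v w (col.valid h)⟩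
  have hφ : Function.Injective φ := by
    intro v w h
    by_cases hc : col v = col w
    · have h' : f (col v) (e v) = f (col w) (e w) := h
      rw [hc] at h'
      exact e.injective (hinj _ h')
    · exact absurd h (hadj v w hc).ne
  have hmem : (φ.toCopy hφ).toSubgraph ∈ F.copySet G := ⟨(φ.toCopy hφ).isoToSubgraph⟩
  rw [FFree] at hG
  rw [hG] at hmem
  exact hmem
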